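/- Let χ : K^× → ℤ/2ℤ be a group homomorphism and n ≥ 1 an integer such that χ vanishes on U_{n+1} but does not vanish identically on U_n, and suppose χ(π) = 0. Suppose v(e₁ − e₂) = 2n and χ(e₁) = 0. Then there exists x ∈ K ∖ {0, e₁, e₂} with χ(x) = 1, χ(x − e₁) = 0 and χ(x − e₂) = 1; in particular χ(x(x−e₁)(x−e₂)) = 0. -/

import Mathlib

/-- An additively written, normalized (i.e. surjective onto `ℤ`) discrete
valuation on a field `K`.  All axioms are imposed at nonzero arguments only,
so the value of `v` at `0` is irrelevant.  For a finite extension `K` of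
`ℚ_[p]`, the normalized valuation `v : K^× → ℤ` of the paper is such a
structure. -/
structure DValuation (K : Type*) [Field K] where
  /-- the valuation map -/
  v : K → ℤ
  v_mul : ∀ ⦃x y : K⦄, x ≠ 0 → y ≠ 0 → v (x * y) = v x + v y
  min_le_v_add : ∀ ⦃x y : K⦄, x ≠ 0 → y ≠ 0 → x + y ≠ 0 → min (v x) (v y) ≤ v (x + y)
  v_surj : ∀ m : ℤ, ∃ x : K, x ≠ 0 ∧ v x = m

namespace DValuation

variable {K : Type*} [Field K] (w : DValuation K)

/-- `u ∈ U_m` : `u` is (a unit) congruent to `1` modulo `𝔭^m`; for `m ≥ 1`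
this forces `v u = 0`, i.e. `u ∈ 𝔬^×`. -/
def IsUnit₁ (m : ℤ) (u : K) : Prop :=
  u = 1 ∨ m ≤ w.v (u - 1)

end DValuation

namespace DValuation

variable {K : Type*} [Field K] (w : DValuation K)

def P (m : ℤ) (x : K) : Prop := x = 0 ∨ m ≤ w.v x

theorem v_one : w.v 1 = 0 := by
  have := w.v_mul (one_ne_zero (α := K)) one_ne_zero
  rw [one_mul] at this; omega

theorem v_neg_one : w.v (-1) = 0 := by
  have h := w.v_mul (neg_ne_zero.2 (one_ne_zero (α := K))) (neg_ne_zero.2 one_ne_zero)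
  rw [neg_mul_neg, one_mul, v_one] at h; omega

theorem v_neg (x : K) (hx : x ≠ 0) : w.v (-x) = w.v x := by
  have h := w.v_mul (neg_ne_zero.2 (one_ne_zero (α := K))) hx
  rw [v_neg_one, neg_one_mul] at h; omega

theorem v_inv (x : K) (hx : x ≠ 0) : w.v x⁻¹ = - w.v x := by
  have h := w.v_mul hx (inv_ne_zero hx)
  rw [mul_inv_cancel₀ hx, v_one] at h; omega

theorem v_pow (x : K) (hx : x ≠ 0) (n : ℕ) : w.v (x ^ n) = n * w.v x := by
  induction n with
  | zero => simp [v_one]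
  | succ k ih => rw [pow_succ, w.v_mul (pow_ne_zero _ hx) hx, ih]; push_cast; ring

variable {w}

theorem P.add {m : ℤ} {x y : K} (hx : w.P m x) (hy : w.P m y) : w.P m (x + y) := by
  by_cases x0 : x = 0
  · simpa [x0] using hy
  by_cases y0 : y = 0
  · simpa [y0] using hx
  by_cases h : x + y = 0
  · exact Or.inl h
  · have := w.min_le_v_add x0 y0 h
    have h1 := hx.resolve_left x0
    have h2 := hy.resolve_left y0
    exact Or.inr (by omega)

theorem P.neg {m : ℤ} {x : K} (hx : w.P m x) : w.P m (-x) := by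
  by_cases x0 : x = 0
  · simpa [x0] using hx
  · right; rw [v_neg _ _ x0]; exact hx.resolve_left x0

theorem P.mul {m l : ℤ} {x y : K} (hx : w.P m x) (hy : w.P l y) : w.P (m + l) (x * y) := by
  by_cases x0 : x = 0
  · left; simp [x0]
  by_cases y0 : y = 0
  · left; simp [y0]
  have h1 := hx.resolve_left x0
  have h2 := hy.resolve_left y0
  right; rw [w.v_mul x0 y0]; omega

theorem P.mono {m l : ℤ} {x : K} (hx : w.P m x) (h : l ≤ m) : w.P l x :=
  hx.imp id h.trans

theorem P.unit {x : K} (hx : w.P 1 (x - 1)) : x ≠ 0 ∧ w.v x = 0 := by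
  have hx0 : x ≠ 0 := by
    rintro rfl
    rcases hx with h | h
    · simp at h
    · rw [zero_sub, v_neg_one] at h; omega
  refine ⟨hx0, ?_⟩
  have h1 : w.P 0 x := by
    have := (hx.mono (l := 0) (by norm_num)).add (w := w) (y := 1) (Or.inr (v_one w).ge)
    simpa using this
  have h2 := h1.resolve_left hx0
  by_contra hne
  have h3 : w.P 1 x := Or.inr (by omega)
  have h4 : w.P 1 1 := by
    have := h3.add hx.neg
    simpa using this
  rcases h4 with h | h
  · simp at h
  · rw [v_one] at h; omega

variable (w)

def V : ValuationSubring K where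
  carrier := {x | w.P 0 x}
  mul_mem' := fun ha hb => by simpa using P.mul ha hb
  one_mem' := Or.inr (v_one w).ge
  add_mem' := fun ha hb => P.add ha hb
  zero_mem' := Or.inl rfl
  neg_mem' := fun ha => P.neg ha
  mem_or_inv_mem' := fun x => by
    by_cases x0 : x = 0
    · left; exact Or.inl x0
    · rcases le_total 0 (w.v x) with h | h
      · left; exact Or.inr h
      · right; right; rw [v_inv _ _ x0]; omega

theorem mem_V (x : K) : x ∈ w.V ↔ w.P 0 x := Iff.rfl

abbrev k := IsLocalRing.ResidueField w.V

theorem residue_eq_zero (a : w.V) : IsLocalRing.residue w.V a = 0 ↔ w.P 1 (a : K) := by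
  rw [IsLocalRing.residue_eq_zero_iff, IsLocalRing.mem_maximalIdeal, mem_nonunits_iff]
  by_cases a0 : (a : K) = 0
  · have : a = 0 := Subtype.ext a0
    subst this
    simp [P]
  have ha : 0 ≤ w.v (a : K) := ((w.mem_V _).1 a.2).resolve_left a0
  constructor
  · intro h
    by_contra h1
    have h2 : ¬ (1 ≤ w.v (a : K)) := fun h => h1 (Or.inr h)
    apply h
    have hm : (a : K)⁻¹ ∈ w.V := by
      right; rw [v_inv _ _ a0]; omega
    exact IsUnit.of_mul_eq_one (⟨_, hm⟩ : w.V) (Subtype.ext (mul_inv_cancel₀ a0))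
  · intro h hu
    obtain ⟨b, hb⟩ := hu.exists_right_inv
    have hb' : (a : K) * (b : K) = 1 := congrArg Subtype.val hb
    have := h.mul ((w.mem_V _).1 b.2)
    rw [hb'] at this
    rcases this with h | h
    · simp at h
    · rw [v_one] at h; omega

theorem P_nat (m : ℕ) : w.P 0 (m : K) := by
  exact natCast_mem w.V m

end DValuation

theorem counting_lemma {k : Type*} [Field k] [Finite k] (φ : k → ZMod 2)
    (hφ : ∀ a b, φ (a + b) = φ a + φ b) (hne : ∃ t, φ t = 1) (c : k) (hc : c ≠ 0) :
    ∃ t : k, t ≠ 0 ∧ φ t = 1 ∧ φ (c / t) = 1 := by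
  classical
  have := Fintype.ofFinite k
  obtain ⟨t0, ht0⟩ := hne
  have h0 : φ 0 = 0 := by have := hφ 0 0; simpa using this
  have z2 : ∀ z : ZMod 2, z ≠ 1 → z = 0 := by decide
  by_contra! hcon
  have h1 : (Finset.univ.filter (fun t => φ t = 0)).card ≤
      (Finset.univ.filter (fun t => φ t = 1)).card := by
    apply Finset.card_le_card_of_injOn (fun t => t + t0)
    · intro t ht
      simp at ht ⊢
      rw [hφ, ht, ht0]; simp
    · intro a _ b _ h
      simpa using h
  have h2 : (Finset.univ.filter (fun t => φ t = 1)).card ≤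
      ((Finset.univ.filter (fun t => φ t = 0)).erase 0).card := by
    apply Finset.card_le_card_of_injOn (fun t => c / t)
    · intro t ht
      simp at ht ⊢
      have t0 : t ≠ 0 := by rintro rfl; rw [h0] at ht; simp at ht
      exact ⟨z2 _ (hcon t t0 ht), hc, t0⟩
    · intro a _ b _ h
      simp only [div_eq_mul_inv] at h
      exact inv_injective (mul_left_cancel₀ hc h)
  have h3 : (0 : k) ∈ Finset.univ.filter (fun t => φ t = 0) := by simp [h0]
  have := Finset.card_erase_lt_of_mem h3
  omega

namespace DValuation

variable {K : Type*} [Field K] [Algebra ℚ_[2] K] (w : DValuation K)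

theorem e_pos [FiniteDimensional ℚ_[2] K]
    (hext : ∀ x : ℚ_[2], x ≠ 0 →
      w.v (algebraMap ℚ_[2] K x) = w.v (algebraMap ℚ_[2] K 2) * x.valuation) :
    0 < w.v (algebraMap ℚ_[2] K 2) := by
  have h20 : algebraMap ℚ_[2] K 2 ≠ 0 := by simp
  have h0 : 0 ≤ w.v (algebraMap ℚ_[2] K 2) := by
    have := w.P_nat 2
    have e2 : ((2 : ℕ) : K) = algebraMap ℚ_[2] K 2 := by
      rw [← map_natCast (algebraMap ℚ_[2] K)]; norm_cast
    rw [e2] at this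
    exact this.resolve_left h20
  refine lt_of_le_of_ne h0 fun he => ?_
  have hP : ∀ x : ℚ_[2], algebraMap ℚ_[2] K x ∈ w.V := by
    intro x
    by_cases hx : x = 0
    · left; simp [hx]
    · right; rw [hext x hx, ← he]; simp
  let f : ℚ_[2] →+* w.V := (algebraMap ℚ_[2] K).codRestrict w.V.toSubring hP
  obtain ⟨z, z0, hz⟩ := w.v_surj (-1)
  have hz_int : IsIntegral ℚ_[2] z := Algebra.IsIntegral.isIntegral z
  have hzV_int : IsIntegral w.V z := by
    obtain ⟨p, hp, hpe⟩ := hz_int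
    refine ⟨p.map f, hp.map f, ?_⟩
    rw [Polynomial.eval₂_map]
    exact hpe
  obtain ⟨y, hy⟩ := IsIntegrallyClosed.isIntegral_iff.1 hzV_int
  have hzV : w.P 0 z := by rw [← hy]; exact y.2
  have := hzV.resolve_left z0
  omega

theorem finite_k [FiniteDimensional ℚ_[2] K]
    (hext : ∀ x : ℚ_[2], x ≠ 0 →
      w.v (algebraMap ℚ_[2] K x) = w.v (algebraMap ℚ_[2] K 2) * x.valuation) :
    CharP w.k 2 ∧ Finite w.k := by
  have hpos := w.e_pos hext
  have h2 : (2 : w.k) = 0 := by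
    have : IsLocalRing.residue w.V 2 = 0 := by
      rw [residue_eq_zero]
      right
      have h : ((2 : w.V) : K) = algebraMap ℚ_[2] K 2 := by
        rw [map_ofNat]; rfl
      rw [h]; omega
    rwa [map_ofNat] at this
  have hchar : CharP w.k 2 := CharTwo.of_one_ne_zero_of_two_eq_zero one_ne_zero h2
  refine ⟨hchar, ?_⟩
  let _ : Algebra (ZMod 2) w.k := ZMod.algebra _ 2
  have hP : ∀ x : ℤ_[2], algebraMap ℚ_[2] K (x : ℚ_[2]) ∈ w.V := by
    intro x
    by_cases hx : (x : ℚ_[2]) = 0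
    · left; simp [hx]
    · right; rw [hext _ hx]
      apply mul_nonneg hpos.le
      rw [PadicInt.valuation_coe]; positivity
  let g : ℤ_[2] →+* w.V :=
    ((algebraMap ℚ_[2] K).comp (PadicInt.Coe.ringHom)).codRestrict w.V.toSubring hP
  let ρ := (IsLocalRing.residue w.V).comp g
  have hρ : ∀ b : ℤ_[2], ρ b = algebraMap (ZMod 2) w.k (b.zmodRepr : ZMod 2) := by
    intro b
    have hm := PadicInt.sub_zmodRepr_mem b
    rw [PadicInt.maximalIdeal_eq_span_p, Ideal.mem_span_singleton] at hm
    obtain ⟨y, hy⟩ := hm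
    have := congrArg ρ hy
    simp only [map_sub, map_mul, map_natCast] at this
    rw [show ((2 : ℕ) : w.k) = 0 by exact_mod_cast h2, zero_mul, sub_eq_zero] at this
    rw [this]; simp
  have hr : Module.rank (ZMod 2) w.k ≤ (Module.finrank ℚ_[2] K : ℕ) := by
    apply rank_le
    intro s hs
    by_contra! hlt
    choose l hl using IsLocalRing.residue_surjective (R := w.V)
    have hlt' : Module.finrank ℚ_[2] K < Fintype.card s := by simpa using hlt
    have hnl : ¬ LinearIndependent ℚ_[2] (fun i : s => ((l i : w.V) : K)) := fun h => by
      have := h.fintype_card_le_finrank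
      omega
    rw [Fintype.not_linearIndependent_iff] at hnl
    obtain ⟨a, ha, i1, hi1⟩ := hnl
    obtain ⟨i0, -, hi0⟩ := Finset.exists_max_image Finset.univ (fun i => ‖a i‖) ⟨i1, Finset.mem_univ _⟩
    have ha0 : a i0 ≠ 0 := by
      intro h
      have := hi0 i1 (Finset.mem_univ _)
      simp only [h, norm_zero] at this
      exact hi1 (norm_le_zero_iff.1 this)
    have hb : ∀ i, ‖a i / a i0‖ ≤ 1 := by
      intro i
      rw [norm_div]
      exact div_le_one_of_le₀ (hi0 i (Finset.mem_univ _)) (norm_nonneg _)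
    let b : s → ℤ_[2] := fun i => ⟨a i / a i0, hb i⟩
    have hsum : ∑ i, g (b i) * l i = 0 := by
      apply Subtype.ext
      have : ∑ i, algebraMap ℚ_[2] K (a i / a i0) * ((l i : w.V) : K) = 0 := by
        have h := congrArg (fun z => algebraMap ℚ_[2] K (a i0)⁻¹ * z) ha
        simp only [mul_zero, Finset.mul_sum] at h
        rw [← h]
        apply Finset.sum_congr rfl
        intro i _
        rw [Algebra.smul_def, ← mul_assoc, ← map_mul, div_eq_mul_inv, mul_comm (a i)]
      push_cast
      exact this
    have hsum2 := congrArg (IsLocalRing.residue w.V) hsum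
    simp only [map_sum, map_mul, map_zero, hl] at hsum2
    have hsum3 : ∑ i : s, ((b i).zmodRepr : ZMod 2) • (i : w.k) = 0 := by
      rw [← hsum2]
      apply Finset.sum_congr rfl
      intro i _
      rw [Algebra.smul_def, ← hρ]; rfl
    have hz := Fintype.linearIndependent_iff.1 hs _ hsum3 i0
    have h1 : b i0 = 1 := Subtype.ext (div_self ha0)
    have := hρ (b i0)
    rw [hz, h1] at this
    simp at this
  have : Module.Finite (ZMod 2) w.k :=
    Module.rank_lt_aleph0_iff.1 (hr.trans_lt (Cardinal.natCast_lt_aleph0))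
  exact Module.finite_of_finite (ZMod 2)

end DValuation

/-- The construction in case (iii) of Proposition 4 when `v(e₁−e₂) = 2n`:
`χ : K^× → ℤ/2ℤ` a homomorphism vanishing on `U_{n+1}` but not identically on
`U_n` (`n ≥ 1`), with `χ(π) = 0`; `e₁, e₂` distinct `1`-units with
`v(e₁−e₂) = 2n` and `χ(e₁) = 0`.  Then there is `x ∈ K ∖ {0, e₁, e₂}` with
`χ(x) = 1`, `χ(x−e₁) = 0`, `χ(x−e₂) = 1`; in particular
`χ(x(x−e₁)(x−e₂)) = 0`. -/
theorem chatelet_case_iii_valuation_two_n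
    (K : Type*) [Field K] [Algebra ℚ_[2] K] [FiniteDimensional ℚ_[2] K]
    (w : DValuation K)
    (hext : ∀ x : ℚ_[2], x ≠ 0 →
      w.v (algebraMap ℚ_[2] K x) = w.v (algebraMap ℚ_[2] K 2) * x.valuation)
    (π : K) (hπ0 : π ≠ 0) (hπ : w.v π = 1)
    (χ : K → ZMod 2)
    (hχ : ∀ ⦃x y : K⦄, x ≠ 0 → y ≠ 0 → χ (x * y) = χ x + χ y)
    (n : ℕ) (hn : 1 ≤ n)
    (hvan : ∀ u : K, w.IsUnit₁ ((n : ℤ) + 1) u → χ u = 0)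
    (hnonvan : ∃ u : K, w.IsUnit₁ (n : ℤ) u ∧ χ u ≠ 0)
    (hχπ : χ π = 0)
    (e₁ e₂ : K) (he₁ : w.IsUnit₁ 1 e₁) (he₂ : w.IsUnit₁ 1 e₂) (hee : e₁ ≠ e₂)
    (hval : w.v (e₁ - e₂) = 2 * (n : ℤ))
    (hχe₁ : χ e₁ = 0) :
    ∃ x : K, x ≠ 0 ∧ x ≠ e₁ ∧ x ≠ e₂ ∧
      χ x = 1 ∧ χ (x - e₁) = 0 ∧ χ (x - e₂) = 1 ∧
      χ (x * (x - e₁) * (x - e₂)) = 0 := by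
  have z2 : ∀ z : ZMod 2, z ≠ 0 → z = 1 := by decide
  have zz : ∀ z : ZMod 2, z + z = 0 := by decide
  obtain ⟨hchar, hfin⟩ := w.finite_k hext
  have hπn0 : π ^ n ≠ 0 := pow_ne_zero _ hπ0
  have hvπn : w.v (π ^ n) = n := by rw [w.v_pow _ hπ0, hπ, mul_one]
  have hPπ : w.P n (π ^ n) := Or.inr hvπn.ge
  have hχ1 : χ 1 = 0 := hvan 1 (Or.inl rfl)
  have hχπn : ∀ m : ℕ, χ (π ^ m) = 0 := by
    intro m
    induction m with
    | zero => simpa using hχ1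
    | succ m ih => rw [pow_succ, hχ (pow_ne_zero _ hπ0) hπ0, ih, hχπ, add_zero]
  -- congruent 1-units have the same character
  have hcong : ∀ x y : K, w.P 1 (y - 1) → w.P (n + 1) (x - y) → χ x = χ y := by
    intro x y hy hxy
    have hx : w.P 1 (x - 1) := by
      have := (hxy.mono (l := 1) (by omega)).add hy
      simpa using this
    have hx0 := hx.unit.1
    obtain ⟨hy0, hvy⟩ := hy.unit
    have h1 : χ (x / y) = 0 := by
      apply hvan
      have h2 : w.P (n + 1) (x / y - 1) := by
        have h3 := hxy.mul (w := w) (l := 0) (y := y⁻¹) (Or.inr (by rw [w.v_inv _ hy0]; omega))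
        rw [add_zero] at h3
        convert h3 using 1
        field_simp
      rcases h2 with h | h
      · left; exact sub_eq_zero.1 h
      · right; exact h
    have h2 := hχ (div_ne_zero hx0 hy0) hy0
    rw [div_mul_cancel₀ _ hy0, h1, zero_add] at h2
    exact h2
  have hU : ∀ a : w.V, w.P n (1 + π ^ n * (a : K) - 1) := by
    intro a
    have := hPπ.mul ((w.mem_V _).1 a.2)
    simpa using this
  have hU1 : ∀ a : w.V, w.P 1 (1 + π ^ n * (a : K) - 1) := fun a => (hU a).mono (by omega)
  have hψcong : ∀ a b : w.V, IsLocalRing.residue w.V a = IsLocalRing.residue w.V b →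
      χ (1 + π ^ n * (a : K)) = χ (1 + π ^ n * (b : K)) := by
    intro a b hab
    apply hcong _ _ (hU1 b)
    have h1 : w.P 1 ((a - b : w.V) : K) := by
      rw [← w.residue_eq_zero, map_sub, hab, sub_self]
    convert hPπ.mul h1 using 1
    push_cast
    ring
  have hψadd : ∀ a b : w.V, χ (1 + π ^ n * ((a + b : w.V) : K)) =
      χ (1 + π ^ n * (a : K)) + χ (1 + π ^ n * (b : K)) := by
    intro a b
    rw [← hχ (hU1 a).unit.1 (hU1 b).unit.1]
    symm
    apply hcong _ _ (hU1 _)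
    have h1 := (hPπ.mul hPπ).mul ((w.mem_V _).1 (a * b).2)
    convert h1.mono (l := (n : ℤ) + 1) (by omega) using 1
    push_cast
    ring
  choose l hl using IsLocalRing.residue_surjective (R := w.V)
  let φ : w.k → ZMod 2 := fun r => χ (1 + π ^ n * (l r : K))
  have hφ : ∀ a : w.V, φ (IsLocalRing.residue w.V a) = χ (1 + π ^ n * (a : K)) :=
    fun a => hψcong _ _ (hl _)
  have hφadd : ∀ r s, φ (r + s) = φ r + φ s := by
    intro r s
    change _ = χ _ + χ _
    rw [← hψadd, ← hφ, map_add, hl, hl]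
  have hφne : ∃ t, φ t = 1 := by
    obtain ⟨u, hu, hχu⟩ := hnonvan
    have hu' : w.P n (u - 1) := hu.imp sub_eq_zero.2 id
    have ha : (u - 1) * (π ^ n)⁻¹ ∈ w.V := by
      have := hu'.mul (w := w) (l := -n) (y := (π ^ n)⁻¹)
        (Or.inr (by rw [w.v_inv _ hπn0, hvπn]))
      rw [add_neg_cancel] at this
      exact this
    refine ⟨IsLocalRing.residue w.V ⟨_, ha⟩, ?_⟩
    rw [hφ]
    apply z2
    convert hχu using 2
    simp only
    field_simp
    ring
  obtain ⟨he10, hve1⟩ : e₁ ≠ 0 ∧ w.v e₁ = 0 :=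
    DValuation.P.unit (w := w) (he₁.imp sub_eq_zero.2 id)
  have hd0 : e₁ - e₂ ≠ 0 := sub_ne_zero.2 hee
  set cK : K := (e₁ - e₂) * (e₁ * (π ^ n * π ^ n))⁻¹ with hcK
  have hden : e₁ * (π ^ n * π ^ n) ≠ 0 := mul_ne_zero he10 (mul_ne_zero hπn0 hπn0)
  have hcK0 : cK ≠ 0 := mul_ne_zero hd0 (inv_ne_zero hden)
  have hvc : w.v cK = 0 := by
    rw [hcK, w.v_mul hd0 (inv_ne_zero hden), w.v_inv _ hden,
      w.v_mul he10 (mul_ne_zero hπn0 hπn0), w.v_mul hπn0 hπn0, hvπn, hval, hve1]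
    ring
  let c : w.V := ⟨cK, Or.inr hvc.ge⟩
  have hc : IsLocalRing.residue w.V c ≠ 0 := by
    rw [Ne, w.residue_eq_zero]
    rintro (h | h)
    · exact hcK0 h
    · change 1 ≤ w.v cK at h; omega
  obtain ⟨t, ht0, ht1, ht2⟩ := counting_lemma φ hφadd hφne _ hc
  obtain ⟨r, hr⟩ := FiniteField.isSquare_of_char_two (F := w.k) (ringChar.eq_iff.2 hchar) t
  have hr0 : r ≠ 0 := by rintro rfl; simp at hr; exact ht0 hr
  obtain ⟨s, hs⟩ := IsLocalRing.residue_surjective (R := w.V) r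
  have hsu : IsUnit s := by
    by_contra h
    apply hr0
    rw [← hs, IsLocalRing.residue_eq_zero_iff]
    exact h
  obtain ⟨i, hi⟩ := hsu.exists_right_inv
  have hiK : (s : K) * (i : K) = 1 := congrArg Subtype.val hi
  have hs0 : (s : K) ≠ 0 := left_ne_zero_of_mul_eq_one hiK
  have hir : IsLocalRing.residue w.V i = r⁻¹ := by
    have := congrArg (IsLocalRing.residue w.V) hi
    rw [map_mul, hs, map_one] at this
    exact eq_inv_of_mul_eq_one_right this
  have h1 : χ (1 + π ^ n * ((s * s : w.V) : K)) = 1 := by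
    rw [← hφ, map_mul, hs, ← hr, ht1]
  have h2 : χ (1 + π ^ n * ((c * (i * i) : w.V) : K)) = 1 := by
    rw [← hφ, map_mul, map_mul, hir, ← mul_inv, ← hr, ← div_eq_mul_inv, ht2]
  have hne1 := (hU1 (s * s)).unit.1
  have hne2 := (hU1 (c * (i * i))).unit.1
  set y : K := π ^ n * ((s * s : w.V) : K) with hy
  have hss : ((s * s : w.V) : K) = s * s := rfl
  have hy0 : y ≠ 0 := mul_ne_zero hπn0 (mul_ne_zero hs0 hs0)
  have hχy : χ y = 0 := by
    rw [hy, hss, hχ hπn0 (mul_ne_zero hs0 hs0), hχ hs0 hs0, hχπn, zz, add_zero]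
  have hx1 : e₁ * (1 + y) - e₁ = e₁ * y := by ring
  have hx2 : e₁ * (1 + y) - e₂ = e₁ * y * (1 + π ^ n * ((c * (i * i) : w.V) : K)) := by
    have hcc : ((c * (i * i) : w.V) : K) = cK * (i * i) := rfl
    have hee' : e₁ - e₂ = e₁ * (π ^ n * π ^ n) * cK := by
      rw [hcK]; field_simp
    have : e₁ * y * (π ^ n * (cK * (i * i))) = e₁ - e₂ := by
      rw [hee', hy, hss]
      linear_combination e₁ * π ^ n * π ^ n * cK * ((s : K) * i + 1) * hiK
    rw [hcc]
    linear_combination -this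
  have hA0 : e₁ * (1 + y) ≠ 0 := mul_ne_zero he10 hne1
  have hB0 : e₁ * (1 + y) - e₁ ≠ 0 := by rw [hx1]; exact mul_ne_zero he10 hy0
  have hC0 : e₁ * (1 + y) - e₂ ≠ 0 := by
    rw [hx2]; exact mul_ne_zero (mul_ne_zero he10 hy0) hne2
  have hA : χ (e₁ * (1 + y)) = 1 := by rw [hχ he10 hne1, hχe₁, h1, zero_add]
  have hB : χ (e₁ * (1 + y) - e₁) = 0 := by rw [hx1, hχ he10 hy0, hχe₁, hχy, zero_add]
  have hC : χ (e₁ * (1 + y) - e₂) = 1 := by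
    rw [hx2, hχ (mul_ne_zero he10 hy0) hne2, hχ he10 hy0, hχe₁, hχy, h2]; simp
  refine ⟨e₁ * (1 + y), hA0, sub_ne_zero.1 hB0, sub_ne_zero.1 hC0, hA, hB, hC, ?_⟩
  rw [hχ (mul_ne_zero hA0 hB0) hC0, hχ hA0 hB0, hA, hB, hC]
  decide
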